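/- Let ϑ₁, ϑ₂ be Beurling weights on ℝ^d and let 1 < p, q, r < ∞. Then A^{p,1,q,r}_{ϑ₁,ϑ₂}(ℝ^d) is a Banach algebra under convolution: there exists a constant C ≥ 1 such that for all f, g ∈ A^{p,1,q,r}_{ϑ₁,ϑ₂}(ℝ^d), the convolution f∗g belongs to A^{p,1,q,r}_{ϑ₁,ϑ₂}(ℝ^d) and ‖f∗g‖_A ≤ C·‖f‖_A·‖g‖_A. -/

import Mathlib

open MeasureTheory Filter Topology
open scoped ENNReal NNReal BigOperators

noncomputable section

/-- The unit cube `α + [0,1)^d` at the integer point `α ∈ ℤ^d`. -/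
def cube {d : ℕ} (α : Fin d → ℤ) : Set (Fin d → ℝ) :=
  Set.univ.pi fun i => Set.Ico (α i : ℝ) ((α i : ℝ) + 1)

/-- The weighted amalgam norm `‖f‖_{pq,ω}` of the space `(L^p_ω, ℓ^q)`. -/
def amalgamNorm {d : ℕ} (p q : ℝ) (ω : (Fin d → ℝ) → ℝ) (f : (Fin d → ℝ) → ℂ) : ℝ≥0∞ :=
  (∑' α : Fin d → ℤ,
      (eLpNorm (fun x => ω x • f x) (ENNReal.ofReal p) (volume.restrict (cube α))) ^ q) ^ (1 / q)

/-- Membership in the weighted amalgam space `(L^p_ω, ℓ^q)`. -/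
def MemAmalgam {d : ℕ} (p q : ℝ) (ω : (Fin d → ℝ) → ℝ) (f : (Fin d → ℝ) → ℂ) : Prop :=
  Measurable f ∧ amalgamNorm p q ω f < ⊤

/-- A Beurling weight: measurable, `ϑ ≥ 1` and submultiplicative. -/
def IsBeurling {d : ℕ} (ϑ : (Fin d → ℝ) → ℝ) : Prop :=
  Measurable ϑ ∧ (∀ x, 1 ≤ ϑ x) ∧ ∀ x y, ϑ (x + y) ≤ ϑ x * ϑ y

/-- The Fourier transform `f̂(ξ) = ∫ f(x) e^{-2πi⟨x,ξ⟩} dx`. -/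
def fourierT {d : ℕ} (f : (Fin d → ℝ) → ℂ) (ξ : Fin d → ℝ) : ℂ :=
  ∫ x : Fin d → ℝ,
    Complex.exp (-(2 * (Real.pi : ℂ) * Complex.I * ∑ i, (x i : ℂ) * (ξ i : ℂ))) * f x

/-- The norm of `A^{p,1,q,r}_{ϑ₁,ϑ₂}(ℝ^d)`. -/
def ANorm {d : ℕ} (p q r : ℝ) (ϑ₁ ϑ₂ : (Fin d → ℝ) → ℝ) (f : (Fin d → ℝ) → ℂ) : ℝ≥0∞ :=
  amalgamNorm p 1 ϑ₁ f + amalgamNorm q r ϑ₂ (fourierT f)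

/-- Membership in `A^{p,1,q,r}_{ϑ₁,ϑ₂}(ℝ^d)`. -/
def MemA {d : ℕ} (p q r : ℝ) (ϑ₁ ϑ₂ : (Fin d → ℝ) → ℝ) (f : (Fin d → ℝ) → ℂ) : Prop :=
  MemAmalgam p 1 ϑ₁ f ∧ MemAmalgam q r ϑ₂ (fourierT f)

/-- Convolution `(f∗g)(x) = ∫ f(x−t)g(t) dt`. -/
def convF {d : ℕ} (f g : (Fin d → ℝ) → ℂ) (x : Fin d → ℝ) : ℂ :=
  ∫ t : Fin d → ℝ, f (x - t) * g t

/-- `ϑ ≺ ϑ'` : domination of weights up to a constant. -/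
def Prec {d : ℕ} (ϑ ϑ' : (Fin d → ℝ) → ℝ) : Prop :=
  ∃ C : ℝ, 0 < C ∧ ∀ x, ϑ x ≤ C * ϑ' x

/-- The Beurling–Domar condition `∑_{n≥1} log ϑ(nx)/n² < ∞`. -/
def BeurlingDomar {d : ℕ} (ϑ : (Fin d → ℝ) → ℝ) : Prop :=
  ∀ x : Fin d → ℝ, Summable fun n : ℕ => Real.log (ϑ ((n : ℝ) • x)) / (n : ℝ) ^ 2

/-- `w` does not tend to zero as `|x| → ∞`. -/
def NotVanishingAtInfty {d : ℕ} (w : (Fin d → ℝ) → ℝ) : Prop :=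
  ∃ δ : ℝ, 0 < δ ∧ ∀ R : ℝ, 0 < R → ∃ x : Fin d → ℝ, R < ‖x‖ ∧ δ ≤ w x

end

/-!
A translate of a unit cube meets at most `2 ^ d` lattice cubes, so translations are bounded by
`2 ^ d` on `(L^p, ℓ¹)`, uniformly in the translation; Minkowski's integral inequality then makes
`(L^p, ℓ¹)` an `L¹`-module under convolution. Since `ϑ₁ x ≤ ϑ₁ t * ϑ₁ (x - t)`, the function
`ϑ₁ |f ∗ g|` is dominated by the convolution of `ϑ₁ |f|` and `ϑ₁ |g|`, and `(L^p, ℓ¹) ⊆ L¹` turns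
the module bound into an algebra bound for `(L^p_{ϑ₁}, ℓ¹)`. On the Fourier side the transform of
`f ∗ g` is `f̂ ĝ` with `|f̂| ≤ ‖f‖₁ ≤ ‖f‖_{p1,ϑ₁}`, so its `(L^q_{ϑ₂}, ℓ^r)` norm is at most that of
`ĝ` times `‖f‖_{p1,ϑ₁}`.
-/

theorem measurable_eLpNorm_left {X T : Type*} [MeasurableSpace X] [MeasurableSpace T]
    {μ : Measure X} [SFinite μ] {K : X → T → ℝ≥0∞} (hK : Measurable (Function.uncurry K))
    {p : ℝ≥0∞} (hp : p ≠ ∞) :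
    Measurable fun t => eLpNorm (fun x => K x t) p μ := by
  rcases eq_or_ne p 0 with rfl | hp0
  · simp only [eLpNorm_exponent_zero, measurable_const]
  simp only [eLpNorm_eq_lintegral_rpow_enorm_toReal hp0 hp, enorm_eq_self]
  exact (Measurable.lintegral_prod_left (hK.pow_const _)).pow_const _

theorem lintegral_rpow_le_weighted {T : Type*} [MeasurableSpace T] {ν : Measure T} {p : ℝ}
    (hp : 1 ≤ p) {k c : T → ℝ≥0∞} (hk : Measurable k) (hc : Measurable c)
    (hc_top : ∀ᵐ t ∂ν, c t ≠ ∞) (hc_zero : ∀ᵐ t ∂ν, c t = 0 → k t = 0) :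
    (∫⁻ t, k t ∂ν) ^ p ≤ (∫⁻ t, k t ^ p * c t ^ (1 - p) ∂ν) * (∫⁻ t, c t ∂ν) ^ (p - 1) := by
  have hp0 : 0 < p := by linarith
  have hp_inv : 1 / p ≤ 1 := (div_le_one hp0).2 hp
  have factor : ∀ᵐ t ∂ν, k t ≤ (k t ^ p * c t ^ (1 - p)) ^ (1 / p) * c t ^ (1 - 1 / p) := by
    filter_upwards [hc_top, hc_zero] with t ht_top ht_zero
    by_cases h0 : c t = 0
    · simp only [ht_zero h0, zero_le]
    · rw [ENNReal.mul_rpow_of_nonneg _ _ (by positivity), ← ENNReal.rpow_mul, ← ENNReal.rpow_mul,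
        mul_assoc, ← ENNReal.rpow_add _ _ h0 ht_top, mul_one_div_cancel hp0.ne',
        show (1 - p) * (1 / p) + (1 - 1 / p) = 0 by field_simp; ring, ENNReal.rpow_one,
        ENNReal.rpow_zero, mul_one]
  have holder : ∫⁻ t, k t ∂ν ≤
      (∫⁻ t, k t ^ p * c t ^ (1 - p) ∂ν) ^ (1 / p) * (∫⁻ t, c t ∂ν) ^ (1 - 1 / p) :=
    (lintegral_mono_ae factor).trans <| ENNReal.lintegral_mul_norm_pow_le
      ((hk.pow_const _).mul (hc.pow_const _)).aemeasurable hc.aemeasurable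
      (by positivity) (by linarith) (by ring)
  refine (ENNReal.rpow_le_rpow holder hp0.le).trans_eq ?_
  rw [ENNReal.mul_rpow_of_nonneg _ _ hp0.le, ← ENNReal.rpow_mul, ← ENNReal.rpow_mul,
    one_div_mul_cancel hp0.ne', ENNReal.rpow_one, sub_mul, one_mul, one_div_mul_cancel hp0.ne']

theorem ae_ae_eq_zero_of_lintegral_rpow_eq_zero {X T : Type*} [MeasurableSpace X]
    [MeasurableSpace T] {μ : Measure X} {ν : Measure T} [SFinite μ] [SFinite ν]
    {K : X → T → ℝ≥0∞} (hK : Measurable (Function.uncurry K)) {p : ℝ} (hp : 0 ≤ p) :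
    ∀ᵐ x ∂μ, ∀ᵐ t ∂ν, ∫⁻ x, K x t ^ p ∂μ = 0 → K x t = 0 := by
  have hKp : Measurable fun t => ∫⁻ x, K x t ^ p ∂μ :=
    Measurable.lintegral_prod_left (hK.pow_const p)
  rw [Measure.ae_ae_comm]
  · refine Eventually.of_forall fun t => ?_
    by_cases h0 : ∫⁻ x, K x t ^ p ∂μ = 0
    · filter_upwards [ENNReal.ae_eq_zero_of_lintegral_rpow_eq_zero hp
        (hK.of_uncurry_right).aemeasurable h0] with x hx _ using hx
    · exact Eventually.of_forall fun x h => absurd h h0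
  · exact (measurableSet_eq_fun (hKp.comp measurable_snd) measurable_const).imp
      (measurableSet_eq_fun hK measurable_const)

theorem lintegral_lintegral_rpow_le {X T : Type*} [MeasurableSpace X] [MeasurableSpace T]
    {μ : Measure X} {ν : Measure T} [SFinite μ] [SFinite ν] {K : X → T → ℝ≥0∞}
    (hK : Measurable (Function.uncurry K)) {p : ℝ} (hp : 1 ≤ p) :
    ∫⁻ x, (∫⁻ t, K x t ∂ν) ^ p ∂μ ≤ (∫⁻ t, (∫⁻ x, K x t ^ p ∂μ) ^ (1 / p) ∂ν) ^ p := by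
  have hp0 : 0 < p := by linarith
  -- Hölder against `c t = ‖K(·, t)‖_p`, rather than duality, avoids dividing by the left-hand side,
  -- which may be infinite.
  set c : T → ℝ≥0∞ := fun t => (∫⁻ x, K x t ^ p ∂μ) ^ (1 / p) with hc_def
  have hc : Measurable c := (Measurable.lintegral_prod_left (hK.pow_const p)).pow_const _
  have hcp (t : T) : ∫⁻ x, K x t ^ p ∂μ = c t ^ p := by
    rw [hc_def, one_div, ENNReal.rpow_inv_rpow hp0.ne']
  by_cases hA : ∫⁻ t, c t ∂ν = ∞
  · simp only [hA, ENNReal.top_rpow_of_pos hp0, le_top]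
  have hW : Measurable (Function.uncurry fun x t => K x t ^ p * c t ^ (1 - p)) :=
    (hK.pow_const p).mul ((hc.comp measurable_snd).pow_const _)
  have holder : ∀ᵐ x ∂μ, (∫⁻ t, K x t ∂ν) ^ p ≤
      (∫⁻ t, K x t ^ p * c t ^ (1 - p) ∂ν) * (∫⁻ t, c t ∂ν) ^ (p - 1) := by
    filter_upwards [ae_ae_eq_zero_of_lintegral_rpow_eq_zero (μ := μ) (ν := ν) hK hp0.le] with x hx
    refine lintegral_rpow_le_weighted hp hK.of_uncurry_left hc
      ((ae_lt_top hc hA).mono fun t ht => ht.ne) (hx.mono fun t ht h0 => ht ?_)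
    rw [hcp, h0, ENNReal.zero_rpow_of_pos hp0]
  have weight (t : T) : c t ^ p * c t ^ (1 - p) ≤ c t := by
    rcases eq_or_ne (c t) 0 with h0 | h0
    · simp only [h0, ENNReal.zero_rpow_of_pos hp0, zero_mul, le_refl]
    rcases eq_or_ne (c t) ∞ with h1 | h1
    · simp only [h1, le_top]
    · rw [← ENNReal.rpow_add _ _ h0 h1, add_sub_cancel, ENNReal.rpow_one]
  calc ∫⁻ x, (∫⁻ t, K x t ∂ν) ^ p ∂μ
      ≤ ∫⁻ x, (∫⁻ t, K x t ^ p * c t ^ (1 - p) ∂ν) * (∫⁻ t, c t ∂ν) ^ (p - 1) ∂μ :=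
        lintegral_mono_ae holder
    _ = (∫⁻ t, (∫⁻ x, K x t ^ p ∂μ) * c t ^ (1 - p) ∂ν) * (∫⁻ t, c t ∂ν) ^ (p - 1) := by
        rw [lintegral_mul_const _ hW.lintegral_prod_right,
          lintegral_lintegral_swap hW.aemeasurable]
        simp_rw [lintegral_mul_const _ (hK.of_uncurry_right.pow_const p)]
    _ ≤ (∫⁻ t, c t ∂ν) * (∫⁻ t, c t ∂ν) ^ (p - 1) := by
        gcongr with t
        exact hcp t ▸ weight t
    _ = (∫⁻ t, c t ∂ν) ^ p := by
        nth_rewrite 1 [← ENNReal.rpow_one (∫⁻ t, c t ∂ν)]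
        rw [← ENNReal.rpow_add_of_nonneg _ _ zero_le_one (by linarith), add_sub_cancel]

theorem eLpNorm_lintegral_le {X T : Type*} [MeasurableSpace X] [MeasurableSpace T]
    {μ : Measure X} {ν : Measure T} [SFinite μ] [SFinite ν] {K : X → T → ℝ≥0∞}
    (hK : Measurable (Function.uncurry K)) {p : ℝ≥0∞} (hp : 1 ≤ p) (hp' : p ≠ ∞) :
    eLpNorm (fun x => ∫⁻ t, K x t ∂ν) p μ ≤ ∫⁻ t, eLpNorm (fun x => K x t) p μ ∂ν := by
  have hp1 : 1 ≤ p.toReal := by simpa using ENNReal.toReal_mono hp' hp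
  simp only [eLpNorm_eq_lintegral_rpow_enorm_toReal (one_pos.trans_le hp).ne' hp', enorm_eq_self]
  rw [one_div, ENNReal.rpow_inv_le_iff (by linarith), ← one_div]
  exact lintegral_lintegral_rpow_le hK hp1

theorem eLpNorm_restrict_le_sum_of_subset_biUnion {X ι ε : Type*} [MeasurableSpace X]
    [TopologicalSpace ε] [ContinuousENorm ε] {μ : Measure X} {f : X → ε}
    (hf : AEStronglyMeasurable f μ) {p : ℝ≥0∞} (hp : 1 ≤ p) {s : Set X} {I : Finset ι}
    {t : ι → Set X} (hs : MeasurableSet s) (ht : ∀ i ∈ I, MeasurableSet (t i))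
    (hst : s ⊆ ⋃ i ∈ I, t i) :
    eLpNorm f p (μ.restrict s) ≤ ∑ i ∈ I, eLpNorm f p (μ.restrict (t i)) := by
  calc eLpNorm f p (μ.restrict s)
      = eLpNorm (s.indicator fun x => ‖f x‖ₑ) p μ := by
        rw [eLpNorm_indicator_eq_eLpNorm_restrict hs, eLpNorm_enorm]
    _ ≤ eLpNorm (∑ i ∈ I, (t i).indicator fun x => ‖f x‖ₑ) p μ := by
        refine eLpNorm_mono_enorm fun x => ?_
        simp only [enorm_eq_self, Finset.sum_apply]
        refine Set.indicator_apply_le' (fun hx => ?_) fun _ => zero_le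
        obtain ⟨i, hi, hxi⟩ := Set.mem_iUnion₂.1 (hst hx)
        calc ‖f x‖ₑ
            = (t i).indicator (fun x => ‖f x‖ₑ) x :=
              (Set.indicator_of_mem hxi fun x => ‖f x‖ₑ).symm
          _ ≤ ∑ i ∈ I, (t i).indicator (fun x => ‖f x‖ₑ) x :=
            Finset.single_le_sum (f := fun i => (t i).indicator (fun x => ‖f x‖ₑ) x)
              (fun _ _ => zero_le) hi
    _ ≤ ∑ i ∈ I, eLpNorm ((t i).indicator fun x => ‖f x‖ₑ) p μ :=
        eLpNorm_sum_le (fun i hi => (hf.enorm.indicator (ht i hi)).aestronglyMeasurable) hp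
    _ = ∑ i ∈ I, eLpNorm f p (μ.restrict (t i)) :=
        Finset.sum_congr rfl fun i hi => by
          rw [eLpNorm_indicator_eq_eLpNorm_restrict (ht i hi), eLpNorm_enorm]

section Cubes

variable {d : ℕ}

theorem measurableSet_cube (α : Fin d → ℤ) : MeasurableSet (cube α) :=
  MeasurableSet.univ_pi fun _ => measurableSet_Ico

instance isProbabilityMeasure_restrict_cube (α : Fin d → ℤ) :
    IsProbabilityMeasure (volume.restrict (cube α)) :=
  ⟨by simp [cube, volume_pi_pi]⟩

theorem mem_cube {α : Fin d → ℤ} {x : Fin d → ℝ} : x ∈ cube α ↔ (fun i => ⌊x i⌋) = α := by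
  simp [cube, Int.floor_eq_iff, funext_iff]

theorem iUnion_cube : ⋃ α : Fin d → ℤ, cube α = Set.univ :=
  Set.eq_univ_of_forall fun _ => Set.mem_iUnion.2 ⟨_, mem_cube.2 rfl⟩

theorem pairwise_disjoint_cube : Pairwise (Function.onFun Disjoint (cube (d := d))) :=
  fun _ _ hαβ => Set.disjoint_left.2 fun _ hα hβ =>
    hαβ ((mem_cube.1 hα).symm.trans (mem_cube.1 hβ))

theorem image_add_left_cube_subset (t : Fin d → ℝ) (α : Fin d → ℤ) :
    (t + ·) '' cube α ⊆
      ⋃ e ∈ Finset.Icc (0 : Fin d → ℤ) 1, cube ((fun i => ⌊t i⌋) + e + α) := by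
  rintro _ ⟨x, hx, rfl⟩
  obtain rfl := mem_cube.1 hx
  refine Set.mem_iUnion₂.2 ⟨fun i => ⌊t i + x i⌋ - ⌊t i⌋ - ⌊x i⌋, ?_, mem_cube.2 ?_⟩
  · refine Finset.mem_Icc.2 ⟨fun i => ?_, fun i => ?_⟩
    · have := Int.le_floor_add (t i) (x i)
      simp only [Pi.zero_apply]
      lia
    · have := Int.le_floor_add_floor (t i) (x i)
      simp only [Pi.one_apply]
      lia
  · ext i
    simp only [Pi.add_apply]
    ring

theorem card_Icc_zero_one : (Finset.Icc (0 : Fin d → ℤ) 1).card = 2 ^ d := by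
  simp [Pi.card_Icc]

end Cubes

section WienerNorm

variable {d : ℕ} {p : ℝ≥0∞}

/-- The norm of the Wiener amalgam space `(L^p, ℓ¹)`. The target is any type with an extended norm,
so that the definition applies both to a function and to its pointwise norm. -/
noncomputable def wienerNorm {ε : Type*} [ENorm ε] (p : ℝ≥0∞) (f : (Fin d → ℝ) → ε) : ℝ≥0∞ :=
  ∑' α : Fin d → ℤ, eLpNorm f p (volume.restrict (cube α))

theorem wienerNorm_enorm {ε : Type*} [ENorm ε] (f : (Fin d → ℝ) → ε) :
    wienerNorm p (fun x => ‖f x‖ₑ) = wienerNorm p f :=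
  tsum_congr fun _ => eLpNorm_enorm f

theorem wienerNorm_mono_enorm {ε ε' : Type*} [ENorm ε] [ENorm ε'] {f : (Fin d → ℝ) → ε}
    {g : (Fin d → ℝ) → ε'} (h : ∀ x, ‖f x‖ₑ ≤ ‖g x‖ₑ) : wienerNorm p f ≤ wienerNorm p g :=
  ENNReal.tsum_le_tsum fun _ => eLpNorm_mono_enorm h

theorem wienerNorm_one {ε : Type*} [ENorm ε] (f : (Fin d → ℝ) → ε) :
    wienerNorm 1 f = ∫⁻ x, ‖f x‖ₑ := by
  simp only [wienerNorm, eLpNorm_one_eq_lintegral_enorm]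
  rw [← lintegral_iUnion measurableSet_cube pairwise_disjoint_cube, iUnion_cube,
    Measure.restrict_univ]

variable {ε : Type*} [TopologicalSpace ε] [ContinuousENorm ε]

theorem wienerNorm_le_wienerNorm_of_exponent_le {q : ℝ≥0∞} (hpq : p ≤ q) {f : (Fin d → ℝ) → ε}
    (hf : AEStronglyMeasurable f) : wienerNorm p f ≤ wienerNorm q f :=
  ENNReal.tsum_le_tsum fun _ => eLpNorm_le_eLpNorm_of_exponent_le hpq hf.restrict

theorem lintegral_enorm_le_wienerNorm (hp : 1 ≤ p) {f : (Fin d → ℝ) → ε}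
    (hf : AEStronglyMeasurable f) : ∫⁻ x, ‖f x‖ₑ ≤ wienerNorm p f :=
  (wienerNorm_one f).symm.trans_le (wienerNorm_le_wienerNorm_of_exponent_le hp hf)

theorem wienerNorm_comp_add_left_le (hp : 1 ≤ p) {f : (Fin d → ℝ) → ε}
    (hf : AEStronglyMeasurable f) (t : Fin d → ℝ) :
    wienerNorm p (fun x => f (t + x)) ≤ 2 ^ d * wienerNorm p f := by
  set I := Finset.Icc (0 : Fin d → ℤ) 1
  have translate (α : Fin d → ℤ) : eLpNorm (fun x => f (t + x)) p (volume.restrict (cube α)) ≤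
      ∑ e ∈ I, eLpNorm f p (volume.restrict (cube ((fun i => ⌊t i⌋) + e + α))) := by
    have hemb : MeasurableEmbedding (t + ·) := measurableEmbedding_addLeft t
    calc eLpNorm (f ∘ (t + ·)) p (volume.restrict (cube α))
        = eLpNorm f p (volume.restrict ((t + ·) '' cube α)) :=
          eLpNorm_comp_measurePreserving hf.restrict
            ((measurePreserving_add_left volume t).restrict_image_emb hemb _)
      _ ≤ _ := eLpNorm_restrict_le_sum_of_subset_biUnion hf hp
          (hemb.measurableSet_image.2 (measurableSet_cube α)) (fun _ _ => measurableSet_cube _)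
          (image_add_left_cube_subset t α)
  calc wienerNorm p (fun x => f (t + x))
      ≤ ∑' α, ∑ e ∈ I, eLpNorm f p (volume.restrict (cube ((fun i => ⌊t i⌋) + e + α))) :=
        ENNReal.tsum_le_tsum translate
    _ = ∑ e ∈ I, ∑' α, eLpNorm f p (volume.restrict (cube ((fun i => ⌊t i⌋) + e + α))) :=
        Summable.tsum_finsetSum fun _ _ => ENNReal.summable
    _ = ∑ _e ∈ I, wienerNorm p f :=
        Finset.sum_congr rfl fun e _ => (Equiv.addLeft ((fun i => ⌊t i⌋) + e)).tsum_eq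
          fun α => eLpNorm f p (volume.restrict (cube α))
    _ = 2 ^ d * wienerNorm p f := by
        rw [Finset.sum_const, card_Icc_zero_one, nsmul_eq_mul, Nat.cast_pow, Nat.cast_ofNat]

theorem wienerNorm_const_mul_le (c : ℝ≥0∞) {F : (Fin d → ℝ) → ℝ≥0∞}
    (hF : AEStronglyMeasurable F) : wienerNorm p (fun x => c * F x) ≤ c * wienerNorm p F := by
  rw [wienerNorm, wienerNorm, ← ENNReal.tsum_mul_left]
  exact ENNReal.tsum_le_tsum fun α => eLpNorm_le_mul_eLpNorm_of_ae_le_mul'' p hF.restrict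
    (Eventually.of_forall fun x => le_rfl)

theorem wienerNorm_lintegral_le {T : Type*} [MeasurableSpace T] {ν : Measure T} [SFinite ν]
    {K : (Fin d → ℝ) → T → ℝ≥0∞} (hK : Measurable (Function.uncurry K)) (hp : 1 ≤ p)
    (hp' : p ≠ ∞) :
    wienerNorm p (fun x => ∫⁻ t, K x t ∂ν) ≤ ∫⁻ t, wienerNorm p (fun x => K x t) ∂ν := by
  simp only [wienerNorm]
  rw [lintegral_tsum fun α => (measurable_eLpNorm_left hK hp').aemeasurable]
  exact ENNReal.tsum_le_tsum fun α => eLpNorm_lintegral_le hK hp hp'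

theorem wienerNorm_lconvolution_le (hp : 1 ≤ p) (hp' : p ≠ ∞) {F G : (Fin d → ℝ) → ℝ≥0∞}
    (hF : Measurable F) (hG : Measurable G) :
    wienerNorm p (F ⋆ₗ G) ≤ 2 ^ d * (∫⁻ t, F t) * wienerNorm p G := by
  calc wienerNorm p (F ⋆ₗ G)
      ≤ ∫⁻ t, wienerNorm p (fun x => F t * G (-t + x)) :=
        wienerNorm_lintegral_le (by fun_prop) hp hp'
    _ ≤ ∫⁻ t, F t * wienerNorm p (fun x => G (-t + x)) :=
        lintegral_mono fun t => wienerNorm_const_mul_le (F t)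
          (hG.comp (measurable_const_add (-t))).aestronglyMeasurable
    _ ≤ ∫⁻ t, F t * (2 ^ d * wienerNorm p G) := by
        gcongr with t
        exact wienerNorm_comp_add_left_le hp hG.aestronglyMeasurable (-t)
    _ = 2 ^ d * (∫⁻ t, F t) * wienerNorm p G := by
        rw [lintegral_mul_const _ hF]
        ring

end WienerNorm

theorem amalgamNorm_one_eq_wienerNorm {d : ℕ} (p : ℝ) (ω : (Fin d → ℝ) → ℝ)
    (f : (Fin d → ℝ) → ℂ) :
    amalgamNorm p 1 ω f = wienerNorm (ENNReal.ofReal p) (fun x => ω x • f x) := by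
  simp only [amalgamNorm, wienerNorm, ENNReal.rpow_one, one_div, inv_one]

theorem lintegral_enorm_le_amalgamNorm {d : ℕ} {p : ℝ} (hp : 1 ≤ p) {ϑ : (Fin d → ℝ) → ℝ}
    (hϑ : ∀ x, 1 ≤ ϑ x) {f : (Fin d → ℝ) → ℂ} (hf : AEStronglyMeasurable f) :
    ∫⁻ x, ‖f x‖ₑ ≤ amalgamNorm p 1 ϑ f := by
  rw [amalgamNorm_one_eq_wienerNorm]
  refine (lintegral_enorm_le_wienerNorm (ENNReal.one_le_ofReal.2 hp) hf).trans
    (wienerNorm_mono_enorm fun x => ?_)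
  rw [enorm_smul]
  refine le_mul_of_one_le_left zero_le ?_
  rw [Real.enorm_of_nonneg (by linarith [hϑ x])]
  exact ENNReal.one_le_ofReal.2 (hϑ x)

theorem MemAmalgam.integrable {d : ℕ} {p : ℝ} (hp : 1 ≤ p) {ϑ : (Fin d → ℝ) → ℝ}
    (hϑ : ∀ x, 1 ≤ ϑ x) {f : (Fin d → ℝ) → ℂ} (hf : MemAmalgam p 1 ϑ f) : Integrable f :=
  ⟨hf.1.aestronglyMeasurable,
    (lintegral_enorm_le_amalgamNorm hp hϑ hf.1.aestronglyMeasurable).trans_lt hf.2⟩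

theorem IsBeurling.enorm_add_le {d : ℕ} {ϑ : (Fin d → ℝ) → ℝ} (hϑ : IsBeurling ϑ)
    (x y : Fin d → ℝ) : ‖ϑ (x + y)‖ₑ ≤ ‖ϑ x‖ₑ * ‖ϑ y‖ₑ := by
  obtain ⟨-, one_le, submul⟩ := hϑ
  have nonneg (z : Fin d → ℝ) : 0 ≤ ϑ z := zero_le_one.trans (one_le z)
  rw [← enorm_mul, Real.enorm_of_nonneg (nonneg _),
    Real.enorm_of_nonneg (mul_nonneg (nonneg x) (nonneg y))]
  exact ENNReal.ofReal_le_ofReal (submul x y)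

theorem measurable_convF {d : ℕ} {f g : (Fin d → ℝ) → ℂ} (hf : Measurable f)
    (hg : Measurable g) : Measurable (convF f g) := by
  have hfg : StronglyMeasurable (Function.uncurry fun x t : Fin d → ℝ => f (x - t) * g t) :=
    Measurable.stronglyMeasurable (by fun_prop)
  exact hfg.integral_prod_right.measurable

theorem IsBeurling.enorm_smul_convF_le {d : ℕ} {ϑ : (Fin d → ℝ) → ℝ} (hϑ : IsBeurling ϑ)
    (f g : (Fin d → ℝ) → ℂ) (x : Fin d → ℝ) :
    ‖ϑ x • convF f g x‖ₑ ≤ ((fun t => ‖ϑ t • g t‖ₑ) ⋆ₗ fun t => ‖ϑ t • f t‖ₑ) x := by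
  calc ‖ϑ x • convF f g x‖ₑ
      ≤ ‖ϑ x‖ₑ * ∫⁻ t, ‖f (x - t) * g t‖ₑ := by
        rw [enorm_smul]
        gcongr
        exact enorm_integral_le_lintegral_enorm _
    _ = ∫⁻ t, ‖ϑ x‖ₑ * ‖f (x - t) * g t‖ₑ := (lintegral_const_mul' _ _ enorm_ne_top).symm
    _ ≤ ∫⁻ t, ‖ϑ t • g t‖ₑ * ‖ϑ (-t + x) • f (-t + x)‖ₑ := by
        refine lintegral_mono fun t => ?_
        have submul : ‖ϑ x‖ₑ ≤ ‖ϑ t‖ₑ * ‖ϑ (-t + x)‖ₑ := by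
          simpa only [add_neg_cancel_left] using hϑ.enorm_add_le t (-t + x)
        simp only [enorm_mul, enorm_smul, ← neg_add_eq_sub t x]
        calc _ ≤ (‖ϑ t‖ₑ * ‖ϑ (-t + x)‖ₑ) * (‖f (-t + x)‖ₑ * ‖g t‖ₑ) := by gcongr
          _ = _ := by ring

theorem amalgamNorm_convF_le {d : ℕ} {p : ℝ} (hp : 1 ≤ p) {ϑ : (Fin d → ℝ) → ℝ}
    (hϑ : IsBeurling ϑ) {f g : (Fin d → ℝ) → ℂ} (hf : Measurable f) (hg : Measurable g) :
    amalgamNorm p 1 ϑ (convF f g) ≤ 2 ^ d * amalgamNorm p 1 ϑ f * amalgamNorm p 1 ϑ g := by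
  simp only [amalgamNorm_one_eq_wienerNorm]
  set P := ENNReal.ofReal p
  have hP : 1 ≤ P := ENNReal.one_le_ofReal.2 hp
  have hϑf : Measurable fun x => ϑ x • f x := hϑ.1.smul hf
  have hϑg : Measurable fun x => ϑ x • g x := hϑ.1.smul hg
  calc wienerNorm P (fun x => ϑ x • convF f g x)
      ≤ wienerNorm P ((fun x => ‖ϑ x • g x‖ₑ) ⋆ₗ fun x => ‖ϑ x • f x‖ₑ) :=
        wienerNorm_mono_enorm (hϑ.enorm_smul_convF_le f g)
    _ ≤ 2 ^ d * (∫⁻ x, ‖ϑ x • g x‖ₑ) * wienerNorm P (fun x => ‖ϑ x • f x‖ₑ) :=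
        wienerNorm_lconvolution_le hP ENNReal.ofReal_ne_top hϑg.enorm hϑf.enorm
    _ ≤ 2 ^ d * wienerNorm P (fun x => ϑ x • g x) * wienerNorm P (fun x => ϑ x • f x) := by
        rw [wienerNorm_enorm]
        gcongr
        exact lintegral_enorm_le_wienerNorm hP hϑg.aestronglyMeasurable
    _ = _ := by ring

theorem amalgamNorm_mul_le {d : ℕ} {q r : ℝ} (hr : 0 < r) (ω : (Fin d → ℝ) → ℝ)
    {u : (Fin d → ℝ) → ℂ} {M : ℝ≥0} (hu : ∀ x, ‖u x‖ₑ ≤ M) (v : (Fin d → ℝ) → ℂ) :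
    amalgamNorm q r ω (fun x => u x * v x) ≤ M * amalgamNorm q r ω v := by
  have on_cube (α : Fin d → ℤ) :
      eLpNorm (fun x => ω x • (u x * v x)) (ENNReal.ofReal q) (volume.restrict (cube α)) ≤
        M * eLpNorm (fun x => ω x • v x) (ENNReal.ofReal q) (volume.restrict (cube α)) := by
    refine eLpNorm_le_mul_eLpNorm_of_ae_le_mul' (Eventually.of_forall fun x => ?_) _
    rw [← mul_smul_comm, enorm_mul]
    gcongr
    exact hu x
  calc amalgamNorm q r ω (fun x => u x * v x)
      ≤ (∑' α : Fin d → ℤ, (M * eLpNorm (fun x => ω x • v x) (ENNReal.ofReal q)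
          (volume.restrict (cube α))) ^ r) ^ (1 / r) := by
        unfold amalgamNorm
        gcongr with α
        exact on_cube α
    _ = M * amalgamNorm q r ω v := by
        simp_rw [ENNReal.mul_rpow_of_nonneg _ _ hr.le]
        rw [ENNReal.tsum_mul_left, ENNReal.mul_rpow_of_nonneg _ _ (by positivity), one_div,
          ENNReal.rpow_rpow_inv hr.ne', amalgamNorm, one_div]

section Fourier

open scoped FourierTransform

variable {d : ℕ}

theorem fourierT_eq_integral_fourierChar (f : (Fin d → ℝ) → ℂ) (ξ : Fin d → ℝ) :
    fourierT f ξ = ∫ x, 𝐞 (-(x ⬝ᵥ ξ)) • f x := by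
  refine integral_congr_ae (Eventually.of_forall fun x => ?_)
  simp only [Circle.smul_def, Real.fourierChar_apply, smul_eq_mul, dotProduct]
  congr 2
  push_cast
  ring

theorem enorm_fourierT_le (f : (Fin d → ℝ) → ℂ) (ξ : Fin d → ℝ) :
    ‖fourierT f ξ‖ₑ ≤ ∫⁻ x, ‖f x‖ₑ := by
  rw [fourierT_eq_integral_fourierChar]
  refine (enorm_integral_le_lintegral_enorm _).trans_eq (lintegral_congr fun x => ?_)
  rw [← ofReal_norm, Circle.norm_smul, ofReal_norm]

-- Mathlib's convolution theorem lives on inner product spaces, whereas `Fin d → ℝ` carries the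
-- sup norm: both sides are transported to `EuclideanSpace ℝ (Fin d)`.
theorem fourierT_eq_fourier (f : (Fin d → ℝ) → ℂ) (ξ : Fin d → ℝ) :
    fourierT f ξ = 𝓕 (f ∘ WithLp.ofLp : EuclideanSpace ℝ (Fin d) → ℂ) (WithLp.toLp 2 ξ) := by
  rw [fourierT_eq_integral_fourierChar, Real.fourier_eq,
    ← (PiLp.volume_preserving_ofLp (Fin d)).integral_comp
      (MeasurableEquiv.toLp 2 (Fin d → ℝ)).symm.measurableEmbedding]
  simp only [EuclideanSpace.inner_eq_star_dotProduct, star_trivial, Function.comp_apply,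
    dotProduct_comm ξ]

theorem convF_comp_ofLp (f g : (Fin d → ℝ) → ℂ) :
    (convF f g ∘ WithLp.ofLp : EuclideanSpace ℝ (Fin d) → ℂ) =
      convolution (g ∘ WithLp.ofLp) (f ∘ WithLp.ofLp) (ContinuousLinearMap.mul ℂ ℂ) volume := by
  ext x
  rw [Function.comp_apply, convF, ← (PiLp.volume_preserving_ofLp (Fin d)).integral_comp
      (MeasurableEquiv.toLp 2 (Fin d → ℝ)).symm.measurableEmbedding]
  simp only [convolution, ContinuousLinearMap.mul_apply', Function.comp_apply, WithLp.ofLp_sub,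
    mul_comm]

theorem fourierT_convF {f g : (Fin d → ℝ) → ℂ} (hf : Integrable f) (hg : Integrable g)
    (ξ : Fin d → ℝ) : fourierT (convF f g) ξ = fourierT f ξ * fourierT g ξ := by
  have comp_ofLp {h : (Fin d → ℝ) → ℂ} (hh : Integrable h) :
      Integrable (h ∘ WithLp.ofLp : EuclideanSpace ℝ (Fin d) → ℂ) :=
    (PiLp.volume_preserving_ofLp (Fin d)).integrable_comp_of_integrable hh
  simp only [fourierT_eq_fourier, convF_comp_ofLp]
  rw [Real.fourier_mul_convolution_eq (comp_ofLp hg) (comp_ofLp hf), mul_comm]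

end Fourier

theorem amalgamNorm_fourierT_convF_le {d : ℕ} {p q r : ℝ} (hp : 1 ≤ p) (hr : 0 < r)
    {ϑ : (Fin d → ℝ) → ℝ} (hϑ : ∀ x, 1 ≤ ϑ x) (ω : (Fin d → ℝ) → ℝ) {f g : (Fin d → ℝ) → ℂ}
    (hf : MemAmalgam p 1 ϑ f) (hg : Integrable g) :
    amalgamNorm q r ω (fourierT (convF f g)) ≤
      amalgamNorm p 1 ϑ f * amalgamNorm q r ω (fourierT g) := by
  rw [funext (fourierT_convF (hf.integrable hp hϑ) hg), ← ENNReal.coe_toNNReal hf.2.ne]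
  refine amalgamNorm_mul_le hr ω (fun ξ => ?_) _
  rw [ENNReal.coe_toNNReal hf.2.ne]
  exact (enorm_fourierT_le f ξ).trans
    (lintegral_enorm_le_amalgamNorm hp hϑ hf.1.aestronglyMeasurable)

theorem A_banach_algebra_general {d : ℕ} {p q r : ℝ} (hp : 1 ≤ p) (_hq : 0 < q) (hr : 0 < r)
    {ϑ₁ : (Fin d → ℝ) → ℝ} (h1 : IsBeurling ϑ₁) (ϑ₂ : (Fin d → ℝ) → ℝ)
    {f g : (Fin d → ℝ) → ℂ} (hf : MemA p q r ϑ₁ ϑ₂ f) (hg : MemA p q r ϑ₁ ϑ₂ g) :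
    MemA p q r ϑ₁ ϑ₂ (convF f g) ∧
      ANorm p q r ϑ₁ ϑ₂ (convF f g) ≤
        2 ^ d * ANorm p q r ϑ₁ ϑ₂ f * ANorm p q r ϑ₁ ϑ₂ g := by
  obtain ⟨hf₁, hf₂⟩ := hf
  obtain ⟨hg₁, hg₂⟩ := hg
  have hgi : Integrable g := hg₁.integrable hp h1.2.1
  have conv_le := amalgamNorm_convF_le hp h1 hf₁.1 hg₁.1
  have fourier_le := amalgamNorm_fourierT_convF_le (q := q) hp hr h1.2.1 ϑ₂ hf₁ hgi
  have fourier_meas : Measurable (fourierT (convF f g)) := by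
    rw [funext (fourierT_convF (hf₁.integrable hp h1.2.1) hgi)]
    exact hf₂.1.mul hg₂.1
  have two_pow_lt_top : (2 : ℝ≥0∞) ^ d < ∞ := ENNReal.pow_lt_top ENNReal.ofNat_lt_top
  refine ⟨⟨⟨measurable_convF hf₁.1 hg₁.1, conv_le.trans_lt ?_⟩,
    ⟨fourier_meas, fourier_le.trans_lt (ENNReal.mul_lt_top hf₁.2 hg₂.2)⟩⟩, ?_⟩
  · exact ENNReal.mul_lt_top (ENNReal.mul_lt_top two_pow_lt_top hf₁.2) hg₁.2
  calc ANorm p q r ϑ₁ ϑ₂ (convF f g)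
      ≤ 2 ^ d * amalgamNorm p 1 ϑ₁ f * amalgamNorm p 1 ϑ₁ g
        + 1 * amalgamNorm p 1 ϑ₁ f * amalgamNorm q r ϑ₂ (fourierT g) := by
        rw [one_mul]
        exact add_le_add conv_le fourier_le
    _ ≤ 2 ^ d * amalgamNorm p 1 ϑ₁ f * amalgamNorm p 1 ϑ₁ g
        + 2 ^ d * amalgamNorm p 1 ϑ₁ f * amalgamNorm q r ϑ₂ (fourierT g) := by
        gcongr
        exact one_le_pow₀ one_le_two
    _ = 2 ^ d * amalgamNorm p 1 ϑ₁ f * ANorm p q r ϑ₁ ϑ₂ g := (mul_add _ _ _).symm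
    _ ≤ 2 ^ d * ANorm p q r ϑ₁ ϑ₂ f * ANorm p q r ϑ₁ ϑ₂ g := by
        gcongr
        exact le_self_add

/-- for `1 < p,q,r < ∞`, `A^{p,1,q,r}_{ϑ₁,ϑ₂}(ℝ^d)` is a Banach algebra
under convolution. -/
theorem A_banach_algebra {d : ℕ} (p q r : ℝ) (hp : 1 < p) (hq : 1 < q) (hr : 1 < r)
    (ϑ₁ ϑ₂ : (Fin d → ℝ) → ℝ) (h1 : IsBeurling ϑ₁) (h2 : IsBeurling ϑ₂) :
    ∃ C : ℝ, 1 ≤ C ∧ ∀ f g : (Fin d → ℝ) → ℂ,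
      MemA p q r ϑ₁ ϑ₂ f → MemA p q r ϑ₁ ϑ₂ g →
        MemA p q r ϑ₁ ϑ₂ (convF f g) ∧
        ANorm p q r ϑ₁ ϑ₂ (convF f g) ≤
          ENNReal.ofReal C * ANorm p q r ϑ₁ ϑ₂ f * ANorm p q r ϑ₁ ϑ₂ g :=
  ⟨2 ^ d, one_le_pow₀ one_le_two, fun _ _ hf hg => by
    simpa [ENNReal.ofReal_pow] using
      A_banach_algebra_general hp.le (by linarith) (by linarith) h1 ϑ₂ hf hg⟩
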